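/- Lemma 2, Cases 1–2 (cross-sub-community edge deletion, endpoints): Let m, α, γ, w, a, b be real numbers with 0 < α < m, γ > 0, w > 0 and b ≥ 0, and assume the pre-update removal gain is nonpositive, i.e. −w/(2·m) + γ·a·b/(4·m²) ≤ 0. If the post-deletion removal gain is positive, i.e. −w/(2·(m − α)) + γ·(a − α)·b/(4·(m − α)²) > 0, then α > m − γ·a·b/(2·w). -/

import Mathlib

section RemovalGain

variable {K : Type*} [Field K] [LinearOrder K] [IsStrictOrderedRing K] {m α γ w a b : K}

/-- The modularity gain `ΔM(v → ∅, γ)` of moving a vertex `v` out of its sub-community, in a graph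
of total edge weight `m`. Only the weights entering the formula are recorded: `w = w(v, U)` towards
the intermediate merge subsequence `U`, `a = d(v)` and `b = d(U)`. The formula is that of the gain
only for `m ≠ 0`; division by zero makes the value at `m = 0` equal to `0`. -/
def removalGain (γ m w a b : K) : K :=
  -w / (2 * m) + γ * a * b / (4 * m ^ 2)

theorem removalGain_mono_degree (hγ : 0 ≤ γ) (hb : 0 ≤ b) :
    Monotone fun a ↦ removalGain γ m w a b := by
  intro a₁ a₂ h
  dsimp only [removalGain]
  gcongr

theorem removalGain_pos_iff (hm : m ≠ 0) :
    0 < removalGain γ m w a b ↔ 2 * w * m < γ * a * b := by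
  have gain_eq : removalGain γ m w a b = (γ * a * b - 2 * w * m) / (4 * m ^ 2) := by
    unfold removalGain
    field_simp
    ring
  rw [gain_eq, div_pos_iff_of_pos_right (by positivity), sub_pos]

theorem removalGain_pos_iff_lt_div (hm : m ≠ 0) (hw : 0 < w) :
    0 < removalGain γ m w a b ↔ m < γ * a * b / (2 * w) := by
  rw [removalGain_pos_iff hm, lt_div_iff₀' (by positivity)]

theorem lemma2_cases12_cross_deletion_endpoints_general
    (hα : 0 ≤ α) (hαm : α ≠ m) (hγ : 0 ≤ γ) (hw : 0 < w) (hb : 0 ≤ b)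
    (hpost : 0 < removalGain γ (m - α) w (a - α) b) :
    m - γ * a * b / (2 * w) < α := by
  have gain_original_degree_pos : 0 < removalGain γ (m - α) w a b :=
    hpost.trans_le (removalGain_mono_degree hγ hb (sub_le_self a hα))
  have remaining_weight_lt : m - α < γ * a * b / (2 * w) :=
    (removalGain_pos_iff_lt_div (sub_ne_zero.mpr hαm.symm) hw).mp gain_original_degree_pos
  exact sub_lt_comm.mp remaining_weight_lt

end RemovalGain

theorem lemma2_cases12_cross_deletion_endpoints
    (m α γ w a b : ℝ)
    (hα0 : 0 < α) (hαm : α < m) (hγ : 0 < γ) (hw : 0 < w) (hb : 0 ≤ b)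
    (hpre : -w / (2 * m) + γ * a * b / (4 * m ^ 2) ≤ 0)
    (hpost : -w / (2 * (m - α)) + γ * (a - α) * b / (4 * (m - α) ^ 2) > 0) :
    α > m - γ * a * b / (2 * w) :=
  lemma2_cases12_cross_deletion_endpoints_general hα0.le hαm.ne hγ.le hw hb hpost
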